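/- Let (X_p)_{p∈ℤ} be complex Banach spaces and η_p ∈ L(X_p, X_{p−1}) bounded operators with n ∈ ℕ such that X_p = 0 for p < 0 and p ≥ n+1 and η_p = 0 for p ≤ 0 and p > n, such that η_p ∘ η_{p+1} = 0 for all p (a finite complex of Banach spaces) and every η_p is regular. Then there exist bounded operators η'_p ∈ L(X_{p−1}, X_p) such that, for all p ∈ ℤ: η_p ∘ η'_p ∘ η_p = η_p, η'_p ∘ η_p ∘ η'_p = η'_p, and η'_{p+1} ∘ η'_p = 0. -/

import Mathlib

/-!
Choose normalized generalized inverses `B p` of `η p` (replace any generalized inverse `C` by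
`C η C`) and set `η' p = B p (1 - B (p-1) η (p-1))`. Since `η (p-1) η p = 0`, the correction factor
acts as the identity on the range of `η p`, so `η' p` is again a normalized generalized inverse.
Since `B p η p B p = B p`, the correction factor of `η' (p+1)` kills the range of `B p`, which
contains the range of `η' p`; this gives the vanishing of the composition.
-/

/-- An operator between (semi)normed spaces is regular if it has a generalized inverse. -/
def IsRegularOp {E F : Type*} [SeminormedAddCommGroup E] [NormedSpace ℂ E]
    [SeminormedAddCommGroup F] [NormedSpace ℂ F] (A : E →L[ℂ] F) : Prop :=
  ∃ B : F →L[ℂ] E, A ∘L B ∘L A = A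

/-- The identity operator `X p →L[ℂ] X q` obtained by transporting along an equality `p = q`
of indices. -/
def castL (X : ℤ → Type*) [∀ p, NormedAddCommGroup (X p)] [∀ p, NormedSpace ℂ (X p)]
    {p q : ℤ} (h : p = q) : X p →L[ℂ] X q := by
  subst h; exact ContinuousLinearMap.id ℂ (X p)

/-- The normalized inverse is `C ∘ A ∘ C`, for any generalized inverse `C` of `A`. -/
theorem IsRegularOp.exists_normalized {E F : Type*} [SeminormedAddCommGroup E] [NormedSpace ℂ E]
    [SeminormedAddCommGroup F] [NormedSpace ℂ F] {A : E →L[ℂ] F} (hA : IsRegularOp A) :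
    ∃ B : F →L[ℂ] E, (∀ x, A (B (A x)) = A x) ∧ ∀ y, B (A (B y)) = B y := by
  obtain ⟨C, hC⟩ := hA
  have h : ∀ x, A (C (A x)) = A x := fun x => DFunLike.congr_fun hC x
  exact ⟨C ∘L A ∘L C, fun x => by simp [h], fun y => by simp [h]⟩

theorem stmt16 (X : ℤ → Type*) [∀ p, NormedAddCommGroup (X p)] [∀ p, NormedSpace ℂ (X p)]
    [∀ p, CompleteSpace (X p)]
    (η : ∀ p : ℤ, X p →L[ℂ] X (p - 1)) (n : ℕ)
    (hX : ∀ p : ℤ, (p < 0 ∨ (n : ℤ) + 1 ≤ p) → Subsingleton (X p))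
    (hη : ∀ p : ℤ, (p ≤ 0 ∨ (n : ℤ) < p) → η p = 0)
    (hcomplex : ∀ p : ℤ,
      η p ∘L castL X (show p + 1 - 1 = p by ring) ∘L η (p + 1) = 0)
    (hreg : ∀ p : ℤ, IsRegularOp (η p)) :
    ∃ η' : ∀ p : ℤ, X (p - 1) →L[ℂ] X p,
      ∀ p : ℤ,
        η p ∘L η' p ∘L η p = η p ∧
        η' p ∘L η p ∘L η' p = η' p ∧
        η' (p + 1) ∘L castL X (show p = p + 1 - 1 by ring) ∘L η' p = 0 := by
  choose B hB hB' using fun p => (hreg p).exists_normalized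
  -- Both cast-dependent facts are proved for a general index equality, so that it can be eliminated.
  have hcast : ∀ (q p : ℤ) (h : q - 1 = p) (x : X q), η p (castL X h (η q x)) = 0 := by
    intro q p h x
    obtain rfl : q = p + 1 := by lia
    exact DFunLike.congr_fun (hcomplex p) x
  have hcomp : ∀ (p : ℤ) (x : X p), η (p - 1) (η p x) = 0 := fun p x => hcast p (p - 1) rfl x
  have hkill : ∀ (p q : ℤ) (h : p = q) (y : X (p - 1)),
      castL X h (B p y) - B q (η q (castL X h (B p y))) = 0 := by
    intro p q h y
    subst h
    change B p y - B p (η p (B p y)) = 0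
    rw [hB', sub_self]
  refine ⟨fun p => B p ∘L (ContinuousLinearMap.id ℂ _ - B (p - 1) ∘L η (p - 1)),
    fun p => ⟨?_, ?_, ?_⟩⟩
  · ext x
    simp [hcomp, hB]
  · ext y
    simp only [ContinuousLinearMap.comp_apply, sub_apply,
      ContinuousLinearMap.id_apply, hcomp, map_zero, sub_zero, hB']
  · ext y
    simp only [ContinuousLinearMap.comp_apply, sub_apply,
      ContinuousLinearMap.id_apply, hkill, map_zero, zero_apply]
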